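/- Let G be a flow graph with a depth-first spanning tree F (parent function f, vertices identified with their preorder numbers), and let T be a rooted tree on V with the parent property, with parent function t. For v ≠ s, let (f'(v), v) denote the derived arc of the arc (f(v), v) with respect to T. Then T has the sibling property (and hence is the dominator tree of G) if and only if for every vertex v ≠ s, either f(v) = t(v) or sd(v) < f'(v). -/

import Mathlib

variable {V : Type*}

/-- `IsWalk A u v p`: `p` is a path from `u` to `v` in the digraph with arc
relation `A`, listing all of its vertices in order. -/
def IsWalk (A : V → V → Prop) (u v : V) (p : List V) : Prop :=
  p.Chain' A ∧ p.head? = some u ∧ p.getLast? = some v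

/-- A flow graph: a directed graph with arc relation `A` and start vertex `s`
such that every vertex is reachable from `s` and no arc enters `s`. -/
structure FlowGraph (V : Type*) where
  A : V → V → Prop
  s : V
  reach : ∀ v : V, ∃ p : List V, IsWalk A s v p
  no_enter : ∀ v : V, ¬ A v s

/-- `DomOn A s v w`: `v` lies on every path from `s` to `w` in the digraph with
arc relation `A`. -/
def DomOn (A : V → V → Prop) (s v w : V) : Prop :=
  ∀ p : List V, IsWalk A s w p → v ∈ p

/-- `v` dominates `w` in the flow graph `G`. -/
def FlowGraph.Dom (G : FlowGraph V) (v w : V) : Prop :=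
  DomOn G.A G.s v w

/-- A rooted tree on vertex set `V`, given by a parent function: the root is a
fixed point of the parent function, and iterating the parent function from any
vertex eventually reaches the root. -/
structure ParentTree (V : Type*) where
  parent : V → V
  root : V
  parent_root : parent root = root
  reaches_root : ∀ v : V, ∃ n : ℕ, parent^[n] v = root

/-- `T.Anc x y`: `x` is an ancestor of `y` in the rooted tree `T` (every vertex
is an ancestor of itself). -/
def ParentTree.Anc (T : ParentTree V) (x y : V) : Prop :=
  ∃ n : ℕ, T.parent^[n] y = x

/-- `T` has the parent property with respect to `G`: for every arc `(v, w)`,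
the parent of `w` is an ancestor of `v` in `T`. -/
def ParentProperty (G : FlowGraph V) (T : ParentTree V) : Prop :=
  ∀ v w : V, G.A v w → T.Anc (T.parent w) v

/-- The sibling property with respect to an arbitrary arc relation `A` with
start vertex `s`: no non-root vertex dominates a distinct vertex with the same
parent. -/
def SiblingPropertyOn (A : V → V → Prop) (s : V) (T : ParentTree V) : Prop :=
  ∀ v w : V, v ≠ T.root → w ≠ T.root → v ≠ w → T.parent v = T.parent w →
    ¬ DomOn A s v w

/-- `T` has the sibling property with respect to the flow graph `G`. -/
def SiblingProperty (G : FlowGraph V) (T : ParentTree V) : Prop :=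
  SiblingPropertyOn G.A G.s T

/-- `T` is the dominator tree of the digraph with arc relation `A` and start
vertex `s`: `T` is rooted at `s`, and the parent of every vertex `v ≠ s` is its
immediate dominator, i.e. a strict dominator of `v` that is dominated by every
strict dominator of `v`. -/
def IsDomTreeOn (A : V → V → Prop) (s : V) (T : ParentTree V) : Prop :=
  T.root = s ∧ ∀ v : V, v ≠ s →
    DomOn A s (T.parent v) v ∧ T.parent v ≠ v ∧
    ∀ u : V, DomOn A s u v → u ≠ v → DomOn A s u (T.parent v)

/-- `T` is the dominator tree of the flow graph `G`. -/
def IsDomTree (G : FlowGraph V) (T : ParentTree V) : Prop :=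
  IsDomTreeOn G.A G.s T

/-- `ord` is (the numbering of) a preorder of the rooted tree `T`: an injective
numbering of the vertices such that for every vertex `v` the descendants of `v`
are ordered consecutively, with `v` first. -/
def IsTreePreorder (T : ParentTree V) (ord : V → ℕ) : Prop :=
  Function.Injective ord ∧
  (∀ v x : V, T.Anc v x → ord v ≤ ord x) ∧
  (∀ v x y z : V, T.Anc v x → T.Anc v z → ord x ≤ ord y → ord y ≤ ord z →
    T.Anc v y)

/-- A preorder `ord` of `T` is low-high on the digraph with arc relation `A`
and start vertex `s`: for every `v ≠ s`, either `(t(v), v)` is an arc, or there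
are arcs `(u, v)` and `(w, v)` with `u < v < w` in the order and `w` not a
descendant of `v` in `T`. -/
def LowHighOn (A : V → V → Prop) (s : V) (T : ParentTree V) (ord : V → ℕ) :
    Prop :=
  IsTreePreorder T ord ∧
  ∀ v : V, v ≠ s → (A (T.parent v) v ∨
    ∃ u w : V, A u v ∧ A w v ∧ ord u < ord v ∧ ord v < ord w ∧ ¬ T.Anc v w)

/-- A low-high order of `T` on the flow graph `G`. -/
def LowHigh (G : FlowGraph V) (T : ParentTree V) (ord : V → ℕ) : Prop :=
  LowHighOn G.A G.s T ord

/-- `B` is (the arc relation of) a spanning tree of `G` rooted at `s`: a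
subgraph of `G` in which no arc enters `s`, every vertex other than `s` has
exactly one entering arc, and every vertex is reachable from `s`. -/
def IsSpanningTree (G : FlowGraph V) (B : V → V → Prop) : Prop :=
  (∀ u v : V, B u v → G.A u v) ∧
  (∀ v : V, ¬ B v G.s) ∧
  (∀ v : V, v ≠ G.s → ∃! u : V, B u v) ∧
  (∀ v : V, ∃ p : List V, IsWalk B G.s v p)

/-- Spanning trees `B` and `R` of `G` rooted at `s` are independent: for every
vertex `v`, the paths from `s` to `v` in `B` and in `R` have in common only
dominators of `v`. -/
def Independent (G : FlowGraph V) (B R : V → V → Prop) : Prop :=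
  ∀ v : V, ∀ p q : List V, IsWalk B G.s v p → IsWalk R G.s v q →
    ∀ x : V, x ∈ p → x ∈ q → G.Dom x v

/-- Spanning trees `B` and `R` of `G` rooted at `s` are strongly independent:
for every pair of vertices `v`, `w`, either the path from `s` to `v` in `B` and
the path from `s` to `w` in `R` have in common only common dominators of `v`
and `w`, or the same holds with the roles of `B` and `R` exchanged. -/
def StronglyIndependent (G : FlowGraph V) (B R : V → V → Prop) : Prop :=
  ∀ v w : V,
    (∀ p q : List V, IsWalk B G.s v p → IsWalk R G.s w q →
      ∀ x : V, x ∈ p → x ∈ q → G.Dom x v ∧ G.Dom x w) ∨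
    (∀ p q : List V, IsWalk R G.s v p → IsWalk B G.s w q →
      ∀ x : V, x ∈ p → x ∈ q → G.Dom x v ∧ G.Dom x w)

/-- `IsDerivedArcOf G T v b a`: `(a, b)` is the derived arc of the arc `(v, b)`
of `G` with respect to `T`: `b` is not an ancestor of `v` in `T`, and `a = v`
if `v` is the parent of `b`, while otherwise `a` is the sibling of `b` in `T`
that is an ancestor of `v`. -/
def IsDerivedArcOf (G : FlowGraph V) (T : ParentTree V) (v b a : V) : Prop :=
  G.A v b ∧ ¬ T.Anc b v ∧
    ((v = T.parent b ∧ a = v) ∨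
     (v ≠ T.parent b ∧ a ≠ T.root ∧ T.parent a = T.parent b ∧ T.Anc a v))

/-- The arc relation of the derived graph of `G` with respect to `T`. -/
def DerivedArc (G : FlowGraph V) (T : ParentTree V) (a b : V) : Prop :=
  ∃ v : V, IsDerivedArcOf G T v b a

/-- `S` is the vertex set of a strongly connected subgraph of the digraph with
arc relation `A`. -/
def StronglyConnectedSet (A : V → V → Prop) (S : Set V) : Prop :=
  S.Nonempty ∧ ∀ u ∈ S, ∀ v ∈ S, ∃ p : List V,
    IsWalk A u v p ∧ ∀ x ∈ p, x ∈ S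

/-- `G` is reducible: every strongly connected subgraph has a single entry
vertex, i.e. a vertex of the subgraph contained in every path from `s` to a
vertex of the subgraph. -/
def Reducible (G : FlowGraph V) : Prop :=
  ∀ S : Set V, StronglyConnectedSet G.A S →
    ∃ v ∈ S, ∀ u ∈ S, ∀ p : List V, IsWalk G.A G.s u p → v ∈ p

/-- A digraph is acyclic if it has no cycle (a path from a vertex to itself
with at least one arc). -/
def Acyclic (A : V → V → Prop) : Prop :=
  ¬ ∃ (v : V) (p : List V), IsWalk A v v p ∧ 2 ≤ p.length

/-- `IsHighWalk A ν u v p`: `p` is a high path from `u` to `v`: a path all of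
whose vertices other than `u` and `v` are greater (in the numbering `ν`) than
both `u` and `v`. -/
def IsHighWalk (A : V → V → Prop) (ν : V → ℕ) (u v : V) (p : List V) : Prop :=
  IsWalk A u v p ∧ ∀ x ∈ p, x ≠ u → x ≠ v → ν u < ν x ∧ ν v < ν x

/-! Let `f` and `t` be the parent functions of `F` and `T`. Two facts combine.

* Suppose a `T`-sibling `u` of `v` dominates `v`. Then `u` dominates `f v`, and `f v ≠ t v`
  because no vertex other than the root dominates its `T`-parent. So `f' v` is the sibling of
  `v` whose `T`-subtree contains `f v`, and it dominates `f v` too. Of the two dominators `u`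
  and `f' v` of `f v`, one dominates the other: either `f' v` dominates `v`, or `u` dominates
  its sibling `f' v`, which lies strictly above `v` in `F`. By descent along `F`, a failure of
  the sibling property yields a vertex `v` with `f v ≠ t v` that is dominated by `f' v`.
* A dominator `x ≠ v` of `f v` dominates `v` if and only if `x ≤ sd v`. If `sd v < x`, the tree
  path to `sd v` followed by a high path to `v` avoids `x`. If some path to `v` avoids `x`, its
  last vertex `u` smaller than `v` starts a high path to `v` and is an ancestor of `f v`; since
  the tree path from `u` to `f v` cannot avoid `x`, we get `sd v ≤ u < x`.
-/

/-- `ReachableWithin A S u v`: there is a path from `u` to `v` in the digraph with arc relation `A`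
all of whose vertices, including `u` and `v`, lie in `S`. The inductive form replaces lists of
vertices by induction on the last arc; see `reachableWithin_iff_exists_isWalk`. -/
inductive ReachableWithin (A : V → V → Prop) (S : Set V) (u : V) : V → Prop
  | refl (hu : u ∈ S) : ReachableWithin A S u u
  | tail {v w : V} (huv : ReachableWithin A S u v) (hvw : A v w) (hw : w ∈ S) :
      ReachableWithin A S u w

namespace ReachableWithin

variable {A : V → V → Prop} {S S' : Set V} {u v w : V}

theorem target_mem (h : ReachableWithin A S u v) : v ∈ S := by
  cases h <;> assumption

theorem mono (hS : S ⊆ S') (h : ReachableWithin A S u v) : ReachableWithin A S' u v := by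
  induction h with
  | refl hu => exact .refl (hS hu)
  | tail _ hvw hw ih => exact ih.tail hvw (hS hw)

theorem trans (huv : ReachableWithin A S u v) (hvw : ReachableWithin A S v w) :
    ReachableWithin A S u w := by
  induction hvw with
  | refl _ => exact huv
  | tail _ hxy hy ih => exact ih.tail hxy hy

theorem within_reachable (h : ReachableWithin A S u v) :
    ReachableWithin A {x | ReachableWithin A S u x} u v := by
  induction h with
  | refl hu => exact .refl (.refl hu)
  | tail hux hxy hy ih => exact ih.tail hxy (hux.tail hxy hy)

theorem exists_last_mem {L : Set V} (h : ReachableWithin A S u v) (hu : u ∈ L) :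
    ∃ x ∈ L, ReachableWithin A S u x ∧ ReachableWithin A (insert x Lᶜ) x v := by
  induction h with
  | refl huS => exact ⟨u, hu, .refl huS, .refl (Set.mem_insert _ _)⟩
  | @tail y z huy hyz hz ih =>
    by_cases hzL : z ∈ L
    · exact ⟨z, hzL, huy.tail hyz hz, .refl (Set.mem_insert _ _)⟩
    · obtain ⟨x, hxL, hux, hxy⟩ := ih
      exact ⟨x, hxL, hux, hxy.tail hyz (Set.mem_insert_of_mem _ hzL)⟩

end ReachableWithin

section Walks

variable {A : V → V → Prop} {S : Set V} {u v : V}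

theorem ReachableWithin.exists_isWalk (h : ReachableWithin A S u v) :
    ∃ p, IsWalk A u v p ∧ ∀ x ∈ p, x ∈ S := by
  induction h with
  | refl hu => exact ⟨[u], ⟨List.isChain_singleton u, rfl, rfl⟩, by simpa using hu⟩
  | @tail v w _ hvw hw ih =>
    obtain ⟨p, ⟨hchain, hhead, hlast⟩, hpS⟩ := ih
    have hjoin : ∀ x ∈ p.getLast?, ∀ y ∈ [w].head?, A x y := by simpa [hlast] using hvw
    refine ⟨p ++ [w], ⟨List.isChain_append.2 ⟨hchain, List.isChain_singleton w, hjoin⟩, ?_, ?_⟩, ?_⟩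
    · simp [hhead]
    · simp
    · simpa [or_imp, forall_and] using ⟨hpS, hw⟩

theorem IsWalk.reachableWithin {p : List V} (hp : IsWalk A u v p) (hpS : ∀ x ∈ p, x ∈ S) :
    ReachableWithin A S u v := by
  induction p using List.reverseRecOn generalizing v with
  | nil => simp [IsWalk] at hp
  | append_singleton p w ih =>
    obtain ⟨hchain, hhead, hlast⟩ := hp
    obtain rfl : w = v := by simpa using hlast
    have hw : w ∈ S := hpS w (by simp)
    rcases p.eq_nil_or_concat' with rfl | ⟨q, x, rfl⟩
    · obtain rfl : w = u := by simpa using hhead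
      exact .refl hw
    · obtain ⟨hchain_qx, -, hjoin⟩ := List.isChain_append.1 hchain
      have hhead_qx : (q ++ [x]).head? = some u := by
        rwa [List.head?_append_of_ne_nil _ (by simp)] at hhead
      have hux : ReachableWithin A S u x :=
        ih ⟨hchain_qx, hhead_qx, by simp⟩ fun y hy => hpS y (List.mem_append_left _ hy)
      exact hux.tail (hjoin x (by simp) w (by simp)) hw

theorem reachableWithin_iff_exists_isWalk :
    ReachableWithin A S u v ↔ ∃ p, IsWalk A u v p ∧ ∀ x ∈ p, x ∈ S :=
  ⟨ReachableWithin.exists_isWalk, fun ⟨_, hp, hpS⟩ => hp.reachableWithin hpS⟩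

end Walks

section Dominators

variable {A : V → V → Prop} {S : Set V} {s v w x y z : V}

theorem DomOn.mem_of_reachableWithin (h : DomOn A s x w) (hw : ReachableWithin A S s w) :
    x ∈ S := by
  obtain ⟨p, hp, hpS⟩ := reachableWithin_iff_exists_isWalk.1 hw
  exact hpS x (h p hp)

theorem not_domOn_iff : ¬ DomOn A s x w ↔ ReachableWithin A {x}ᶜ s w := by
  simp only [DomOn, reachableWithin_iff_exists_isWalk, not_forall, exists_prop,
    Set.mem_compl_singleton_iff]
  exact exists_congr fun p => and_congr_right fun _ =>
    ⟨fun hx y hy hyx => hx (hyx ▸ hy), fun h hx => h x hx rfl⟩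

theorem DomOn.trans (hxy : DomOn A s x y) (hyz : DomOn A s y z) : DomOn A s x z := by
  by_contra hxz
  have hy : ReachableWithin A {x}ᶜ s y :=
    hyz.mem_of_reachableWithin (not_domOn_iff.1 hxz).within_reachable
  exact not_domOn_iff.2 hy hxy

theorem DomOn.of_arc (h : DomOn A s x w) (hvw : A v w) (hxw : x ≠ w) : DomOn A s x v := by
  by_contra hxv
  exact not_domOn_iff.2 ((not_domOn_iff.1 hxv).tail hvw hxw.symm) h

end Dominators

namespace ParentTree

variable {T : ParentTree V} {x y z : V}

theorem Anc.refl (T : ParentTree V) (x : V) : T.Anc x x := ⟨0, rfl⟩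

theorem anc_parent (T : ParentTree V) (x : V) : T.Anc (T.parent x) x := ⟨1, rfl⟩

theorem Anc.trans (hxy : T.Anc x y) (hyz : T.Anc y z) : T.Anc x z := by
  obtain ⟨m, rfl⟩ := hxy
  obtain ⟨n, rfl⟩ := hyz
  exact ⟨m + n, Function.iterate_add_apply _ _ _ _⟩

theorem Anc.anc_parent_of_ne (h : T.Anc x y) (hne : x ≠ y) : T.Anc x (T.parent y) := by
  obtain ⟨n, rfl⟩ := h
  cases n with
  | zero => exact absurd rfl hne
  | succ n => exact ⟨n, rfl⟩

theorem Anc.eq_root (h : T.Anc x T.root) : x = T.root := by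
  obtain ⟨n, rfl⟩ := h
  exact Function.iterate_fixed T.parent_root n

theorem Anc.total (hx : T.Anc x z) (hy : T.Anc y z) : T.Anc x y ∨ T.Anc y x := by
  obtain ⟨m, rfl⟩ := hx
  obtain ⟨n, rfl⟩ := hy
  rcases le_total m n with h | h
  · exact .inr ⟨n - m, by rw [← Function.iterate_add_apply, Nat.sub_add_cancel h]⟩
  · exact .inl ⟨m - n, by rw [← Function.iterate_add_apply, Nat.sub_add_cancel h]⟩

theorem wellFounded_anc_and_ne (T : ParentTree V) :
    WellFounded fun x y => T.Anc x y ∧ x ≠ y := by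
  refine ⟨fun y => ?_⟩
  obtain ⟨n, hn⟩ := T.reaches_root y
  induction n generalizing y with
  | zero =>
    obtain rfl : y = T.root := hn
    exact ⟨_, fun x hx => absurd hx.1.eq_root hx.2⟩
  | succ n ih =>
    have hparent := ih (T.parent y) hn
    refine ⟨_, fun x hx => ?_⟩
    by_cases hxp : x = T.parent y
    · exact hxp ▸ hparent
    · exact hparent.inv ⟨hx.1.anc_parent_of_ne hx.2, hxp⟩

theorem Anc.antisymm (hxy : T.Anc x y) (hyx : T.Anc y x) : x = y := by
  by_contra hne
  exact T.wellFounded_anc_and_ne.asymmetric _ _ ⟨hxy, hne⟩ ⟨hyx, Ne.symm hne⟩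

theorem eq_root_of_parent_eq_self (h : T.parent x = x) : x = T.root := by
  obtain ⟨n, hn⟩ := T.reaches_root x
  rwa [Function.iterate_fixed h] at hn

/-- `F.Spans G`: `F` is a spanning tree of the flow graph `G` rooted at its start vertex, given by
its parent function. -/
structure Spans (F : ParentTree V) (G : FlowGraph V) : Prop where
  root_eq : F.root = G.s
  arc_parent : ∀ v, v ≠ G.s → G.A (F.parent v) v

end ParentTree

namespace ParentTree.Spans

variable {G : FlowGraph V} {F : ParentTree V} {x y w : V}

theorem start_anc (hF : F.Spans G) (v : V) : F.Anc G.s v :=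
  hF.root_eq ▸ F.reaches_root v

theorem reachableWithin_of_anc (hF : F.Spans G) (h : F.Anc x y) :
    ReachableWithin G.A {b | F.Anc x b ∧ F.Anc b y} x y := by
  obtain ⟨n, hn⟩ := h
  induction n generalizing y with
  | zero =>
    obtain rfl : y = x := hn
    exact .refl ⟨.refl F y, .refl F y⟩
  | succ n ih =>
    have hparent := ih (y := F.parent y) hn
    by_cases hy : y = G.s
    · have hfixed : F.parent y = y := by rw [hy, ← hF.root_eq, F.parent_root]
      rwa [hfixed] at hparent
    · refine .tail (hparent.mono ?_) (hF.arc_parent y hy) ⟨⟨n + 1, hn⟩, .refl F y⟩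
      exact fun b hb => ⟨hb.1, hb.2.trans (F.anc_parent y)⟩

theorem anc_of_dom (hF : F.Spans G) (h : G.Dom x w) : F.Anc x w :=
  (h.mem_of_reachableWithin (hF.reachableWithin_of_anc (hF.start_anc w))).2

theorem dom_of_dom_of_anc (hF : F.Spans G) (h : G.Dom x w) (hxy : F.Anc x y)
    (hyw : F.Anc y w) : G.Dom x y := by
  by_contra hnot
  have hy : ReachableWithin G.A {x}ᶜ G.s y := not_domOn_iff.1 hnot
  have hw : ReachableWithin G.A {x}ᶜ y w :=
    (hF.reachableWithin_of_anc hyw).mono fun b hb hbx =>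
      hy.target_mem ((hb.1.trans (hbx ▸ .refl F b)).antisymm hxy)
  exact not_domOn_iff.2 (hy.trans hw) h

theorem dom_total (hF : F.Spans G) (hx : G.Dom x w) (hy : G.Dom y w) :
    G.Dom x y ∨ G.Dom y x :=
  ((hF.anc_of_dom hx).total (hF.anc_of_dom hy)).imp
    (fun h => hF.dom_of_dom_of_anc hx h (hF.anc_of_dom hy))
    (fun h => hF.dom_of_dom_of_anc hy h (hF.anc_of_dom hx))

end ParentTree.Spans

section SiblingProperty

variable {G : FlowGraph V} {F T : ParentTree V} {u v x w a b : V}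

theorem ParentProperty.dom_of_anc (hpp : ParentProperty G T) (hT : T.root = G.s)
    (h : T.Anc x w) : G.Dom x w := by
  by_contra hnot
  have hw : ReachableWithin G.A {x}ᶜ G.s w := not_domOn_iff.1 hnot
  induction hw with
  | refl hs => exact hs ((ParentTree.Anc.eq_root (hT.symm ▸ h)).trans hT).symm
  | tail hv hvw hw ih =>
    exact ih ((h.anc_parent_of_ne (Ne.symm hw)).trans (hpp _ _ hvw)) (not_domOn_iff.2 hv)

theorem IsDerivedArcOf.sibling_of_ne_parent (h : IsDerivedArcOf G T v b a)
    (hv : v ≠ T.parent b) :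
    a ≠ T.root ∧ a ≠ b ∧ T.parent a = T.parent b ∧ T.Anc a v := by
  obtain ⟨-, hb, ⟨hvb, -⟩ | ⟨-, ha, hab, hav⟩⟩ := h
  · exact absurd hvb hv
  · exact ⟨ha, fun hab => hb (hab ▸ hav), hab, hav⟩

theorem ParentTree.Spans.not_dom_parent (hF : F.Spans G) (hpp : ParentProperty G T)
    (hT : T.root = G.s) (hu : u ≠ T.root) : ¬ G.Dom u (T.parent u) := by
  intro h
  have hparent : F.Anc (T.parent u) u := hF.anc_of_dom (hpp.dom_of_anc hT (T.anc_parent u))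
  exact hu (ParentTree.eq_root_of_parent_eq_self (hparent.antisymm (hF.anc_of_dom h)))

theorem siblingProperty_iff_not_dom_derived (hF : F.Spans G) (hT : T.root = G.s)
    (hpp : ParentProperty G T) {f' : V → V}
    (hf' : ∀ v, v ≠ G.s → IsDerivedArcOf G T (F.parent v) v (f' v)) :
    SiblingProperty G T ↔
      ∀ v, v ≠ G.s → F.parent v = T.parent v ∨ ¬ G.Dom (f' v) v := by
  constructor
  · intro hsib v hv
    refine or_iff_not_imp_left.2 fun hne => ?_
    obtain ⟨hroot, hne_v, hparent, -⟩ := (hf' v hv).sibling_of_ne_parent hne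
    exact hsib (f' v) v hroot (hT ▸ hv) hne_v hparent
  · intro hderived u v hu hv huv hparent hdom
    induction v using F.wellFounded_anc_and_ne.induction with
    | _ v ih =>
    have hvs : v ≠ G.s := hT ▸ hv
    have hu_fv : G.Dom u (F.parent v) := hdom.of_arc (hF.arc_parent v hvs) huv
    have hne : F.parent v ≠ T.parent v := fun h =>
      hF.not_dom_parent hpp hT hu (hparent ▸ h ▸ hu_fv)
    have hnot : ¬ G.Dom (f' v) v := (hderived v hvs).resolve_left hne
    obtain ⟨hroot, hne_v, hparent', hanc⟩ := (hf' v hvs).sibling_of_ne_parent hne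
    have hf'_fv : G.Dom (f' v) (F.parent v) := hpp.dom_of_anc hT hanc
    rcases hF.dom_total hu_fv hf'_fv with h | h
    · have habove : F.Anc (f' v) v := (hF.anc_of_dom hf'_fv).trans (F.anc_parent v)
      have hne_u : u ≠ f' v := fun h => hnot (h ▸ hdom)
      exact ih (f' v) ⟨habove, hne_v⟩ hroot hne_u (hparent.trans hparent'.symm) h
    · exact hnot (h.trans hdom)

end SiblingProperty

section Semidominators

variable {A : V → V → Prop} {G : FlowGraph V} {F : ParentTree V} {ν : V → ℕ} {u v x y : V}

/-- `IsSemidominator A ν u v`: in the numbering `ν`, `u` is the semi-dominator of `v`, the minimum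
vertex from which there is a high path to `v`. -/
def IsSemidominator (A : V → V → Prop) (ν : V → ℕ) (u v : V) : Prop :=
  (∃ p, IsHighWalk A ν u v p) ∧ ∀ x, (∃ p, IsHighWalk A ν x v p) → ν u ≤ ν x

/-- `F` is a depth-first spanning tree of the flow graph `G`, with preorder numbering `ν`. -/
structure IsDepthFirstTree (G : FlowGraph V) (F : ParentTree V) (ν : V → ℕ) : Prop
    extends F.Spans G where
  preorder : IsTreePreorder F ν
  anc_or_lt : ∀ v w, G.A v w → F.Anc v w ∨ ν w < ν v

theorem IsTreePreorder.injective (hν : IsTreePreorder F ν) : Function.Injective ν := hν.1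

theorem IsTreePreorder.le_of_anc (hν : IsTreePreorder F ν) (h : F.Anc x y) : ν x ≤ ν y :=
  hν.2.1 x y h

theorem IsTreePreorder.lt_of_anc_of_ne (hν : IsTreePreorder F ν) (h : F.Anc x y) (hne : x ≠ y) :
    ν x < ν y :=
  (hν.le_of_anc h).lt_of_ne (hν.injective.ne hne)

theorem IsTreePreorder.anc_of_le_of_le (hν : IsTreePreorder F ν) (huy : F.Anc u y)
    (hux : ν u ≤ ν x) (hxy : ν x ≤ ν y) : F.Anc u x :=
  hν.2.2 u u x y (.refl F u) huy hux hxy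

theorem exists_isHighWalk_iff (hν : Function.Injective ν) (huv : ν u < ν v) :
    (∃ p, IsHighWalk A ν u v p) ↔ ReachableWithin A (insert u {x | ν v ≤ ν x}) u v := by
  rw [reachableWithin_iff_exists_isWalk]
  refine exists_congr fun p => and_congr_right fun _ => forall₂_congr fun x _ => ?_
  constructor
  · intro hx
    by_cases hxu : x = u
    · exact .inl hxu
    by_cases hxv : x = v
    · exact .inr (congrArg ν hxv).ge
    · exact .inr (hx hxu hxv).2.le
  · intro hx hxu hxv
    have hlt : ν v < ν x := (hx.resolve_left hxu).lt_of_ne (hν.ne (Ne.symm hxv))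
    exact ⟨huv.trans hlt, hlt⟩

theorem IsDepthFirstTree.anc_of_reachableWithin (hF : IsDepthFirstTree G F ν) {S : Set V}
    (hS : ∀ x ∈ S, ν u ≤ ν x) (h : ReachableWithin G.A S u y) : F.Anc u y := by
  induction h with
  | refl _ => exact .refl F u
  | @tail v w _ hvw hw ih =>
    rcases hF.anc_or_lt v w hvw with hanc | hlt
    · exact ih.trans hanc
    · exact hF.preorder.anc_of_le_of_le ih (hS w hw) hlt.le

theorem IsSemidominator.le_of_dom {d : V} (hd : IsSemidominator G.A ν d v) (hF : F.Spans G)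
    (hν : IsTreePreorder F ν) (hdom : G.Dom x v) (hxv : x ≠ v) : ν x ≤ ν d := by
  by_contra! hdx
  have hx_lt_v : ν x < ν v := hν.lt_of_anc_of_ne (hF.anc_of_dom hdom) hxv
  have hsd : ReachableWithin G.A {x}ᶜ G.s d :=
    (hF.reachableWithin_of_anc (hF.start_anc d)).mono fun b hb hbx =>
      hdx.not_ge (hbx ▸ hν.le_of_anc hb.2)
  have hdv : ReachableWithin G.A {x}ᶜ d v :=
    ((exists_isHighWalk_iff hν.injective (hdx.trans hx_lt_v)).1 hd.1).mono <|
      Set.insert_subset (ne_of_apply_ne ν hdx.ne) fun b (hb : ν v ≤ ν b) =>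
        ne_of_apply_ne ν (hx_lt_v.trans_le hb).ne'
  exact not_domOn_iff.2 (hsd.trans hdv) hdom

theorem ParentTree.Spans.lt_of_dom_of_reachableWithin (hF : F.Spans G) (hν : IsTreePreorder F ν)
    (hdom : G.Dom x y) (hu : ReachableWithin G.A {x}ᶜ G.s u) (huy : F.Anc u y) : ν u < ν x := by
  by_contra! hxu
  have huy' : ReachableWithin G.A {x}ᶜ u y :=
    (hF.reachableWithin_of_anc huy).mono fun b hb hbx =>
      (hxu.lt_of_ne (hν.injective.ne (Ne.symm hu.target_mem))).not_ge (hbx ▸ hν.le_of_anc hb.1)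
  exact not_domOn_iff.2 (hu.trans huy') hdom

theorem IsSemidominator.lt_of_not_dom {d : V} (hd : IsSemidominator G.A ν d v)
    (hF : IsDepthFirstTree G F ν) (hv : v ≠ G.s) (hx : G.Dom x (F.parent v))
    (hnot : ¬ G.Dom x v) : ν d < ν x := by
  have hsv : ν G.s < ν v := hF.preorder.lt_of_anc_of_ne (hF.start_anc v) hv.symm
  obtain ⟨u, huv, hsu, huv_high⟩ :=
    (not_domOn_iff.1 hnot).exists_last_mem (L := {y | ν y < ν v}) hsv
  have hhigh : ReachableWithin G.A (insert u {y | ν v ≤ ν y}) u v :=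
    huv_high.mono (Set.insert_subset_insert fun y (hy : ¬ ν y < ν v) => not_lt.1 hy)
  have hanc : F.Anc u v := hF.anc_of_reachableWithin
    (Set.forall_mem_insert.2 ⟨le_rfl, fun _ => huv.le.trans⟩) hhigh
  calc ν d ≤ ν u := hd.2 u ((exists_isHighWalk_iff hF.preorder.injective huv).2 hhigh)
    _ < ν x := hF.lt_of_dom_of_reachableWithin hF.preorder hx hsu
      (hanc.anc_parent_of_ne (ne_of_apply_ne ν huv.ne))

theorem IsSemidominator.dom_iff_le {d : V} (hd : IsSemidominator G.A ν d v)
    (hF : IsDepthFirstTree G F ν) (hv : v ≠ G.s) (hx : G.Dom x (F.parent v)) (hxv : x ≠ v) :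
    G.Dom x v ↔ ν x ≤ ν d :=
  ⟨fun h => hd.le_of_dom hF.toSpans hF.preorder h hxv,
    fun h => not_not.1 fun hnot => (hd.lt_of_not_dom hF hv hx hnot).not_ge h⟩

end Semidominators

theorem stmt18_general {G : FlowGraph V} {F T : ParentTree V} {ν : V → ℕ}
    (hF : IsDepthFirstTree G F ν) {sd : V → V}
    (hsd : ∀ v, v ≠ G.s → IsSemidominator G.A ν (sd v) v)
    (hT : T.root = G.s) (hpp : ParentProperty G T) {f' : V → V}
    (hf' : ∀ v, v ≠ G.s → IsDerivedArcOf G T (F.parent v) v (f' v)) :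
    SiblingProperty G T ↔
      ∀ v, v ≠ G.s → F.parent v = T.parent v ∨ ν (sd v) < ν (f' v) := by
  rw [siblingProperty_iff_not_dom_derived hF.toSpans hT hpp hf']
  refine forall₂_congr fun v hv => or_congr_right' fun hne => ?_
  obtain ⟨-, hne_v, -, hanc⟩ := (hf' v hv).sibling_of_ne_parent hne
  have hdom : G.Dom (f' v) (F.parent v) := hpp.dom_of_anc hT hanc
  rw [(hsd v hv).dom_iff_le hF hv hdom hne_v, not_le]

/-- Let `F` be a depth-first spanning tree of `G` with vertices identified with
their preorder numbers (numbering `ν`), and let `T` be a tree with the parent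
property, `(f'(v), v)` being the derived arc of `(f(v), v)` with respect to
`T`. Then `T` has the sibling property (and hence is the dominator tree of
`G`) if and only if for every `v ≠ s`, either `f(v) = t(v)` or
`sd(v) < f'(v)`. -/
theorem stmt18 [Fintype V] (G : FlowGraph V) (F : ParentTree V)
    (hFroot : F.root = G.s)
    (ν : V → ℕ) (hν : IsTreePreorder F ν)
    (hFsub : ∀ v : V, v ≠ G.s → G.A (F.parent v) v)
    (hdfs : ∀ v w : V, G.A v w → F.Anc v w ∨ ν w < ν v)
    (sd : V → V)
    (hsd : ∀ v : V, v ≠ G.s →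
      (∃ p : List V, IsHighWalk G.A ν (sd v) v p) ∧
      ∀ u : V, (∃ p : List V, IsHighWalk G.A ν u v p) → ν (sd v) ≤ ν u)
    (T : ParentTree V) (hTroot : T.root = G.s) (hpp : ParentProperty G T)
    (f' : V → V)
    (hf' : ∀ v : V, v ≠ G.s → IsDerivedArcOf G T (F.parent v) v (f' v)) :
    SiblingProperty G T ↔
      ∀ v : V, v ≠ G.s → F.parent v = T.parent v ∨ ν (sd v) < ν (f' v) :=
  stmt18_general ⟨⟨hFroot, hFsub⟩, hν, hdfs⟩ hsd hTroot hpp hf'
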